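/- Let 1 ≤ m ≤ n be integers. The complete bipartite graph K_{m,n} is almost planar if and only if m ≤ 2, or m = 3 and n ≤ 6, or m = 4 and n = 4. -/

import Mathlib

/-!
The drawings that exist are straight-line drawings with explicit integer coordinates
(`StraightLine.two_any`, `three_six`, `four_four`); that they are 1-planar is a finite computation
with orientation signs, except for `K_{2,n}`, which is drawn without crossings.

For the converse it suffices to exclude `K_{3,7}` and `K_{4,5}`. The only topological input is that
in any drawing of `K_{3,3}` two edges without common end meet (`k33`). It is proved by a parity
argument of van Kampen type: for two disjoint paths `e`, `f` the function `e s - f t` has a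
continuous logarithm, which relates the turning angles of each path around the ends of the other;
summing these relations over all independent pairs of edges gives a contradiction modulo two. The
consequence `k33_disjoint` excludes six disjoint branch sets of a `K_{3,3}` minor.

In a 1-planar drawing the union of two crossing edges, without ends, is a connected set (`node`)
disjoint from all other edges. Call one part of the vertices rows, the other columns. If two rows
`x`, `y` were joined by three crossings, then `x`, `y` and the star of a third row, against the three
nodes, would be a `K_{3,3}` minor (`no_three`). By the same argument, after contracting a crossing
between `x` and `z`, three rows pairwise joined by crossings admit only one crossing for each
pair, provided that there is a fourth row (`no_triangle`).

On the other hand, for any three rows and three columns there is a crossing between two of the rows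
and two of the columns. For `K_{3,7}` there are at most `2 + 2 + 2` crossings of different rows and
columns, but each serves only 5 of the 35 triples of columns. For `K_{4,5}`, take three of the rows. If
all pairs of them are joined by crossings, there are at most three crossings, which serve at most nine
of the ten triples of columns. Otherwise there are at most four, and four pairs of columns
serving all ten triples contain a triangle of columns. Two of the three rows, not joined by
a crossing, together with the fourth row and the three columns of the triangle yield an additional
crossing, which contradicts `no_triangle` with rows and columns exchanged.
-/

open Set

/-- A drawing of a simple graph `G` in the plane: an injective placement of vertices
together with, for each edge, a continuous injective curve between the points of its
endpoints, whose interior avoids all vertex points; any two distinct edge curves meet in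
finitely many points, and no point lies in the interiors of three distinct edge curves. -/
structure Drawing {V : Type*} (G : SimpleGraph V) where
  pos : V → ℝ × ℝ
  pos_inj : Function.Injective pos
  curve : G.edgeSet → ℝ → ℝ × ℝ
  curve_cont : ∀ e, ContinuousOn (curve e) (Icc 0 1)
  curve_inj : ∀ e, InjOn (curve e) (Icc 0 1)
  curve_ends : ∀ e : G.edgeSet, ∃ a b : V, (e : Sym2 V) = s(a, b) ∧
      curve e 0 = pos a ∧ curve e 1 = pos b
  interior_no_vertex : ∀ e, ∀ t ∈ Ioo (0 : ℝ) 1, ∀ v, curve e t ≠ pos v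
  finite_meet : ∀ e f, e ≠ f → (curve e '' Icc 0 1 ∩ curve f '' Icc 0 1).Finite
  no_triple_point : ∀ p : ℝ × ℝ, ∀ e f g, e ≠ f → e ≠ g → f ≠ g →
      p ∈ curve e '' Ioo 0 1 → p ∈ curve f '' Ioo 0 1 → p ∈ curve g '' Ioo 0 1 → False

/-- Two edges cross in a drawing if some point lies in the interiors of both curves. -/
def Drawing.Crosses {V : Type*} {G : SimpleGraph V} (D : Drawing G) (e f : G.edgeSet) : Prop :=
  e ≠ f ∧ ∃ p : ℝ × ℝ, p ∈ D.curve e '' Ioo 0 1 ∧ p ∈ D.curve f '' Ioo 0 1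

/-- A drawing is almost planar (1-planar) if every edge crosses at most one other edge. -/
def Drawing.IsAlmostPlanar {V : Type*} {G : SimpleGraph V} (D : Drawing G) : Prop :=
  ∀ e f g, D.Crosses e f → D.Crosses e g → f = g

/-- A graph is almost planar if it admits a drawing in which every edge crosses at most
one other edge. -/
def SimpleGraph.AlmostPlanar {V : Type*} (G : SimpleGraph V) : Prop :=
  ∃ D : Drawing G, D.IsAlmostPlanar

/-! ### Paths realizing `K_{3,3}` in the plane -/

theorem exists_log_lift {F : ℝ × ℝ → ℂ} (hF : Continuous F) (h0 : ∀ z, F z ≠ 0) :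
    ∃ L : ℝ × ℝ → ℂ, Continuous L ∧ ∀ z, Complex.exp (L z) = F z := by
  obtain ⟨f, ⟨-, hf⟩, -⟩ := Complex.isCoveringMapOn_exp.existsUnique_continuousMap_lifts
    (⟨F, hF⟩ : C(ℝ × ℝ, ℂ)) (a₀ := (0, 0)) (Complex.exp_log (h0 (0, 0))) (fun z => h0 z)
  exact ⟨f, f.continuous, fun z => congrFun hf z⟩

theorem log_lift_diff {L L' : ℝ → ℂ} (hL : Continuous L) (hL' : Continuous L') {c : ℂ}
    (hc : ∀ t, Complex.exp (L t) = c * Complex.exp (L' t)) : L 1 - L 0 = L' 1 - L' 0 := by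
  have hc0 : c ≠ 0 := by
    rintro rfl
    simpa using hc 0
  obtain ⟨f, -, hf⟩ := Complex.isCoveringMapOn_exp.existsUnique_continuousMap_lifts
    (⟨fun t => Complex.exp (L t), by fun_prop⟩ : C(ℝ, ℂ)) (a₀ := 0) (e₀ := L 0) rfl
    (fun z => Complex.exp_ne_zero _)
  have h1 := hf ⟨L, hL⟩ ⟨rfl, rfl⟩
  have h2 := hf ⟨fun t => L' t + (L 0 - L' 0), by fun_prop⟩ ⟨by simp, by
    funext t
    have := hc 0
    have h3 := hc t
    have : Complex.exp (L 0 - L' 0) = c := by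
      rw [Complex.exp_sub, hc 0]; field_simp [Complex.exp_ne_zero]
    simp [Complex.exp_add, this, h3, mul_comm]⟩
  have h4 : L 1 = L' 1 + (L 0 - L' 0) := by
    have := congrArg (fun g : C(ℝ, ℂ) => g 1) (h1.trans h2.symm)
    simpa using this
  rw [h4]; ring

/-- The increment over `[0, 1]` of a continuous logarithm depends neither on its choice nor on a
constant factor. The factor is needed because `e s - f t` is seen from both paths. -/
theorem exists_turn (g : ℝ → ℂ) : ∃ w : ℂ, ∀ (c : ℂ) (L : ℝ → ℂ), c ≠ 0 → Continuous L →
    (∀ t, Complex.exp (L t) = c * g t) → L 1 - L 0 = w := by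
  by_cases h : ∃ (c : ℂ) (L : ℝ → ℂ), c ≠ 0 ∧ Continuous L ∧ ∀ t, Complex.exp (L t) = c * g t
  · obtain ⟨c, L, hc, hL, h⟩ := h
    refine ⟨L 1 - L 0, fun c' L' hc' hL' h' => log_lift_diff (c := c' / c) hL' hL fun t => ?_⟩
    rw [h', h]; field_simp
  · exact ⟨0, fun c L hc hL hexp => (h ⟨c, L, hc, hL, hexp⟩).elim⟩

/-- The change of a continuous logarithm of `g` over `[0, 1]`; its imaginary part is the angle by
which `g` turns around the origin. Junk if no multiple of `g` has a continuous logarithm on `ℝ`. -/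
noncomputable def turn (g : ℝ → ℂ) : ℂ := (exists_turn g).choose

theorem turn_eq {g L : ℝ → ℂ} {c : ℂ} (hc : c ≠ 0) (hL : Continuous L)
    (h : ∀ t, Complex.exp (L t) = c * g t) : L 1 - L 0 = turn g :=
  (exists_turn g).choose_spec c L hc hL h

/-- For two paths that never meet, `e s - f t` has a continuous logarithm on the whole parameter
plane; its increments along the four sides of the unit square add up to zero. -/
theorem turn_square {e f : ℝ → ℂ} (he : Continuous e) (hf : Continuous f)
    (h : ∀ s t, e s ≠ f t) :
    turn (fun s => e s - f 0) + turn (fun t => f t - e 1)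
      = turn (fun t => f t - e 0) + turn (fun s => e s - f 1) := by
  obtain ⟨L, hL, hexp⟩ := exists_log_lift (F := fun z => e z.1 - f z.2) (by fun_prop)
    (fun z => sub_ne_zero.2 (h _ _))
  have h1 := turn_eq (g := fun s => e s - f 0) (L := fun s => L (s, 0)) one_ne_zero
    (by fun_prop) (by intro t; simp [hexp])
  have h2 := turn_eq (g := fun s => e s - f 1) (L := fun s => L (s, 1)) one_ne_zero
    (by fun_prop) (by intro t; simp [hexp])
  have h3 := turn_eq (g := fun t => f t - e 0) (L := fun t => L (0, t)) (c := -1) (by simp)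
    (by fun_prop) (by intro t; simp [hexp])
  have h4 := turn_eq (g := fun t => f t - e 1) (L := fun t => L (1, t)) (c := -1) (by simp)
    (by fun_prop) (by intro t; simp [hexp])
  rw [← h1, ← h2, ← h3, ← h4]; ring

/-- The turn equals the difference of prescribed logarithms of the end values, up to a multiple
of `2πi`. -/
theorem turn_exp {g : ℝ → ℂ} (hg : Continuous g) (h0 : ∀ t, g t ≠ 0) {a b : ℂ}
    (ha : Complex.exp a = g 0) (hb : Complex.exp b = g 1) :
    ∃ n : ℤ, turn g = b - a + n * (2 * Real.pi * Complex.I) := by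
  obtain ⟨L, hL, hexp⟩ := exists_log_lift (F := fun z => g z.1) (by fun_prop) (fun z => h0 _)
  have h1 := turn_eq (g := g) (L := fun s => L (s, 0)) one_ne_zero
    (by fun_prop) (by intro t; simp [hexp])
  obtain ⟨k, hk⟩ := Complex.exp_eq_exp_iff_exists_int.1 ((hexp (0, 0)).trans ha.symm)
  obtain ⟨l, hl⟩ := Complex.exp_eq_exp_iff_exists_int.1 ((hexp (1, 0)).trans hb.symm)
  refine ⟨l - k, ?_⟩
  rw [← h1]
  rw [hk, hl]; push_cast; ring

/-- A logarithm of `u - v`. When `r` holds for exactly one of the two orders of the pair,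
the chosen logarithms of `u - v` and `v - u` differ by exactly `πi`, in a direction given by `r`. -/
noncomputable def dlog (r : Prop) [Decidable r] (u v : ℂ) : ℂ :=
  if r then Complex.log (u - v) else Complex.log (v - u) + Real.pi * Complex.I

theorem exp_dlog (r : Prop) [Decidable r] {u v : ℂ} (h : u ≠ v) :
    Complex.exp (dlog r u v) = u - v := by
  unfold dlog
  split_ifs
  · exact Complex.exp_log (sub_ne_zero.2 h)
  · rw [Complex.exp_add, Complex.exp_log (sub_ne_zero.2 h.symm), Complex.exp_pi_mul_I]; ring

/-- If nine paths join each of three points to each of three others, two of them without a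
common index meet. Otherwise write the turn of each path about each point not on it as a difference
of the logarithms `dlog` plus `2πi` times an integer. For each of the 18 independent pairs of paths
`turn_square` then becomes a relation between four of these integers, with right side `0` or `-1`
(`main`). Every integer occurs in exactly two relations, while nine right sides are odd. -/
theorem k33 (p q : Fin 3 → ℂ) (γ : Fin 3 → Fin 3 → ℝ → ℂ) (hc : ∀ i j, Continuous (γ i j))
    (h0 : ∀ i j, γ i j 0 = p i) (h1 : ∀ i j, γ i j 1 = q j) :
    ∃ i i' j j', i ≠ i' ∧ j ≠ j' ∧ ∃ s t, γ i j s = γ i' j' t := by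
  by_contra! hd
  have key : ∀ x : Fin 3, ∃ y, y ≠ x := by decide
  -- vertices off an edge are avoided by it
  have hp : ∀ k i j, k ≠ i → ∀ t, γ i j t ≠ p k := by
    intro k i j hk t
    obtain ⟨j', hj'⟩ := key j
    rw [← h0 k j']
    exact hd i k j j' hk.symm hj'.symm t 0
  have hq : ∀ l i j, l ≠ j → ∀ t, γ i j t ≠ q l := by
    intro l i j hl t
    obtain ⟨i', hi'⟩ := key i
    rw [← h1 i' l]
    exact hd i i' j l hi'.symm hl.symm t 1
  have hpp : ∀ i k, k ≠ i → p i ≠ p k := fun i k h => by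
    simpa [h0] using hp k i 0 h 0
  have hqq : ∀ i k, k ≠ i → q i ≠ q k := fun i k h => by
    simpa [h1] using hq k 0 i h 1
  have hqp : ∀ i j, q j ≠ p i := fun i j => by
    obtain ⟨i', hi'⟩ := key i
    simpa [h1] using hp i i' j hi'.symm 1
  have hP : ∀ k i j, ∃ n : ℤ, k ≠ i → turn (fun t => γ i j t - p k)
      = dlog False (q j) (p k) - dlog (i < k) (p i) (p k) + n * (2 * Real.pi * Complex.I) := by
    intro k i j
    by_cases h : k = i
    · exact ⟨0, fun h' => (h' h).elim⟩
    · obtain ⟨n, hn⟩ := turn_exp (g := fun t => γ i j t - p k) ((hc i j).sub continuous_const)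
        (fun t => sub_ne_zero.2 (hp k i j h t))
        (by simp only [h0]; exact exp_dlog (i < k) (hpp i k h))
        (by simp only [h1]; exact exp_dlog False (hqp k j))
      exact ⟨n, fun _ => hn⟩
  have hQ : ∀ l i j, ∃ n : ℤ, l ≠ j → turn (fun t => γ i j t - q l)
      = dlog (j < l) (q j) (q l) - dlog True (p i) (q l) + n * (2 * Real.pi * Complex.I) := by
    intro l i j
    by_cases h : l = j
    · exact ⟨0, fun h' => (h' h).elim⟩
    · obtain ⟨n, hn⟩ := turn_exp (g := fun t => γ i j t - q l) ((hc i j).sub continuous_const)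
        (fun t => sub_ne_zero.2 (hq l i j h t))
        (by simp only [h0]; exact exp_dlog True (hqp i l).symm)
        (by simp only [h1]; exact exp_dlog (j < l) (hqq j l h))
      exact ⟨n, fun _ => hn⟩
  choose nP hnP using hP
  choose nQ hnQ using hQ
  have hne : (2 * Real.pi * Complex.I : ℂ) ≠ 0 := by simp [Real.pi_ne_zero]
  have main : ∀ i k j l, i < k → j ≠ l →
      nP k i j + nQ j k l - nP i k l - nQ l i j = if j < l then -1 else 0 := by
    intro i k j l hik hjl
    have sq := turn_square (hc i j) (hc k l) (hd i k j l hik.ne hjl)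
    simp only [h0, h1] at sq
    rw [hnP k i j hik.ne', hnQ j k l hjl, hnP i k l hik.ne, hnQ l i j hjl.symm] at sq
    have hik' : ¬ k < i := hik.not_gt
    have : ((nP k i j + nQ j k l - nP i k l - nQ l i j : ℤ) : ℂ) * (2 * Real.pi * Complex.I)
        = ((if j < l then -1 else 0 : ℤ) : ℂ) * (2 * Real.pi * Complex.I) := by
      rcases lt_or_gt_of_ne hjl with h | h
      · have h' : ¬ l < j := h.not_gt
        simp only [dlog, hik, hik', h, h', if_true, if_false] at sq ⊢
        push_cast
        linear_combination sq
      · have h' : ¬ j < l := h.not_gt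
        simp only [dlog, hik, hik', h, h', if_true, if_false] at sq ⊢
        push_cast
        linear_combination sq
    exact_mod_cast mul_right_cancel₀ hne this
  have e := fun j l => main 0 1 j l (by decide)
  have e' := fun j l => main 0 2 j l (by decide)
  have e'' := fun j l => main 1 2 j l (by decide)
  have a1 := e 0 1 (by decide); have a2 := e 0 2 (by decide); have a3 := e 1 2 (by decide)
  have a4 := e 1 0 (by decide); have a5 := e 2 0 (by decide); have a6 := e 2 1 (by decide)
  have b1 := e' 0 1 (by decide); have b2 := e' 0 2 (by decide); have b3 := e' 1 2 (by decide)
  have b4 := e' 1 0 (by decide); have b5 := e' 2 0 (by decide); have b6 := e' 2 1 (by decide)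
  have c1 := e'' 0 1 (by decide); have c2 := e'' 0 2 (by decide); have c3 := e'' 1 2 (by decide)
  have c4 := e'' 1 0 (by decide); have c5 := e'' 2 0 (by decide); have c6 := e'' 2 1 (by decide)
  -- the sum of the eighteen relations is contradictory modulo two
  simp at a1 a2 a3 a4 a5 a6 b1 b2 b3 b4 b5 b6 c1 c2 c3 c4 c5 c6
  omega

theorem k33_joined (p q : Fin 3 → ℂ) (W : Fin 3 → Fin 3 → Set ℂ)
    (hW : ∀ i j, JoinedIn (W i j) (p i) (q j)) :
    ∃ i i' j j', i ≠ i' ∧ j ≠ j' ∧ (W i j ∩ W i' j').Nonempty := by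
  obtain ⟨i, i', j, j', hi, hj, s, t, h⟩ := k33 p q (fun i j => (hW i j).somePath.extend)
    (fun i j => Path.continuous_extend _) (fun i j => by simp) (fun i j => by simp)
  have key : ∀ i j s, (hW i j).somePath.extend s ∈ W i j := fun i j s => by
    have : (hW i j).somePath.extend s ∈ range (hW i j).somePath.extend := mem_range_self _
    rw [Path.extend_range] at this
    obtain ⟨u, hu⟩ := this
    exact hu ▸ (hW i j).somePath_mem u
  have hmem : (hW i j).somePath.extend s ∈ W i' j' := h ▸ key i' j' t
  exact ⟨i, i', j, j', hi, hj, _, key i j s, hmem⟩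

/-- The plane contains no `K_{3,3}` minor, in the form of disjoint sets for the six branch sets,
any two on opposite sides having path-connected union. -/
theorem k33_disjoint (A N : Fin 3 → Set ℂ) (hA : Pairwise fun i j => Disjoint (A i) (A j))
    (hN : Pairwise fun i j => Disjoint (N i) (N j)) (hAN : ∀ i k, Disjoint (A i) (N k))
    (a : ∀ i, (A i).Nonempty) (b : ∀ i, (N i).Nonempty)
    (h : ∀ i k, IsPathConnected (A i ∪ N k)) : False := by
  choose p hp using a
  choose q hq using b
  obtain ⟨i, i', j, j', hi, hj, z, hz, hz'⟩ := k33_joined p q (fun i k => A i ∪ N k)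
    fun i k => (h i k).joinedIn _ (Or.inl (hp i)) _ (Or.inr (hq k))
  rcases hz with hz | hz <;> rcases hz' with hz' | hz'
  · exact disjoint_left.1 (hA hi) hz hz'
  · exact disjoint_left.1 (hAN _ _) hz hz'
  · exact disjoint_left.1 (hAN _ _) hz' hz
  · exact disjoint_left.1 (hN hj) hz hz'

/-! ### Sketches of complete bipartite graphs -/

/-- The data of a 1-planar drawing of the complete bipartite graph on `X` and `Y` that the
nonexistence proofs use. Elements of `X` are called rows, elements of `Y` columns. -/
structure Sketch (X Y : Type*) where
  /-- The positions of the rows. -/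
  p : X → ℂ
  /-- The positions of the columns. -/
  q : Y → ℂ
  /-- The open arc of an edge, as a set of points without the two ends. -/
  arc : X × Y → Set ℂ
  p_inj : Function.Injective p
  q_inj : Function.Injective q
  p_ne_q : ∀ x y, p x ≠ q y
  p_notMem : ∀ x e, p x ∉ arc e
  q_notMem : ∀ y e, q y ∉ arc e
  conn : ∀ e, IsPathConnected (arc e)
  conn_left : ∀ e, IsPathConnected (insert (p e.1) (arc e))
  conn_right : ∀ e, IsPathConnected (insert (q e.2) (arc e))
  one_cross : ∀ e f g, e ≠ f → e ≠ g → (arc e ∩ arc f).Nonempty → (arc e ∩ arc g).Nonempty →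
    f = g

namespace Sketch

variable {X Y : Type*} (S : Sketch X Y)

/-- Two distinct edges cross if their open arcs meet. -/
def Cross (e f : X × Y) : Prop := e ≠ f ∧ (S.arc e ∩ S.arc f).Nonempty

variable {S} in
theorem Cross.symm {e f : X × Y} (h : S.Cross e f) : S.Cross f e :=
  ⟨h.1.symm, by rw [inter_comm]; exact h.2⟩

variable {S} in
theorem Cross.unique {e f g : X × Y} (h : S.Cross e f) (hg : S.Cross e g) : f = g :=
  S.one_cross e f g h.1 hg.1 h.2 hg.2

/-- The same picture with rows and columns exchanged. -/
def transpose : Sketch Y X where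
  p := S.q
  q := S.p
  arc e := S.arc e.swap
  p_inj := S.q_inj
  q_inj := S.p_inj
  p_ne_q x y := (S.p_ne_q y x).symm
  p_notMem x _ := S.q_notMem x _
  q_notMem x _ := S.p_notMem x _
  conn _ := S.conn _
  conn_left e := S.conn_right e.swap
  conn_right e := S.conn_left e.swap
  one_cross _ _ _ hf hg h h' := Prod.swap_injective (S.one_cross _ _ _
    (fun h => hf (Prod.swap_injective h)) (fun h => hg (Prod.swap_injective h)) h h')

theorem transpose_cross {e f : X × Y} (h : S.Cross e f) : S.transpose.Cross e.swap f.swap :=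
  ⟨fun h' => h.1 (Prod.swap_injective h'), by simpa [transpose] using h.2⟩

/-- The part of the picture spanned by some of the rows and columns. -/
def comap {X' Y' : Type*} (φ : X' ↪ X) (ψ : Y' ↪ Y) : Sketch X' Y' where
  p := S.p ∘ φ
  q := S.q ∘ ψ
  arc e := S.arc (φ e.1, ψ e.2)
  p_inj := S.p_inj.comp φ.injective
  q_inj := S.q_inj.comp ψ.injective
  p_ne_q x y := S.p_ne_q _ _
  p_notMem x e := S.p_notMem _ _
  q_notMem x e := S.q_notMem _ _
  conn e := S.conn _
  conn_left e := S.conn_left (φ e.1, ψ e.2)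
  conn_right e := S.conn_right (φ e.1, ψ e.2)
  one_cross e f g hf hg hef heg := by
    have inj : Function.Injective fun e : X' × Y' => (φ e.1, ψ e.2) :=
      φ.injective.prodMap ψ.injective
    exact inj (S.one_cross _ _ _ (inj.ne hf) (inj.ne hg) hef heg)

/-- An edge together with its two ends. -/
def edge (e : X × Y) : Set ℂ := insert (S.p e.1) (insert (S.q e.2) (S.arc e))

theorem edge_conn (e : X × Y) : IsPathConnected (S.edge e) := by
  have := (S.conn_left e).union (S.conn_right e) (by
    obtain ⟨z, hz⟩ := (S.conn e).nonempty
    exact ⟨z, Or.inr hz, Or.inr hz⟩)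
  convert this using 1
  ext z; simp [edge]; tauto

/-- Every `K_{3,3}` inside the picture contains a crossing of two edges without common end. -/
theorem exists_cross {x : Fin 3 → X} {y : Fin 3 → Y} (hx : Function.Injective x)
    (hy : Function.Injective y) :
    ∃ i i' j j', i ≠ i' ∧ j ≠ j' ∧ S.Cross (x i, y j) (x i', y j') := by
  obtain ⟨i, i', j, j', hi, hj, z, hz, hz'⟩ := k33_joined (S.p ∘ x) (S.q ∘ y)
    (fun i j => S.edge (x i, y j)) (fun i j => (S.edge_conn _).joinedIn _ (by simp [edge]) _
      (by simp [edge]))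
  refine ⟨i, i', j, j', hi, hj, fun h => hi (hx (congrArg Prod.fst h)), z, ?_⟩
  simp only [edge, mem_insert_iff] at hz hz'
  rcases hz with rfl | rfl | hz <;> rcases hz' with h | h | hz'
  · exact (hi (hx (S.p_inj h))).elim
  · exact (S.p_ne_q _ _ h).elim
  · exact (S.p_notMem _ _ hz').elim
  · exact (S.p_ne_q _ _ h.symm).elim
  · exact (hj (hy (S.q_inj h))).elim
  · exact (S.q_notMem _ _ hz').elim
  · exact (S.p_notMem _ _ (h ▸ hz)).elim
  · exact (S.q_notMem _ _ (h ▸ hz)).elim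
  · exact ⟨hz, hz'⟩

/-- The union of two open arcs. If they cross, this is a connected set reaching the rows and
columns of both edges. -/
def node (e f : X × Y) : Set ℂ := S.arc e ∪ S.arc f

variable {S}

theorem Cross.node_conn {e f : X × Y} (h : S.Cross e f) : IsPathConnected (S.node e f) :=
  (S.conn e).union (S.conn f) h.2

theorem Cross.disjoint_arc {e f g : X × Y} (h : S.Cross e f) (he : g ≠ e) (hf : g ≠ f) :
    Disjoint (S.arc g) (S.node e f) := by
  rw [disjoint_left]
  rintro z hz (hz' | hz')
  · exact hf (h.unique ⟨he.symm, z, hz', hz⟩).symm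
  · exact he (h.symm.unique ⟨hf.symm, z, hz', hz⟩).symm

/-- Distinct crossings give disjoint nodes, since each edge takes part in only one. -/
theorem Cross.disjoint_node {e f e' f' : X × Y} (h : S.Cross e f) (h' : S.Cross e' f')
    (h1 : e' ≠ e) (h2 : e' ≠ f) : Disjoint (S.node e f) (S.node e' f') := by
  have h3 : f' ≠ e := fun h3 => h2 (h.unique (h3 ▸ h'.symm)).symm
  have h4 : f' ≠ f := fun h4 => h1 (h.symm.unique (h4 ▸ h'.symm)).symm
  exact (disjoint_union_left.2 ⟨h.disjoint_arc h1 h2, h.disjoint_arc h3 h4⟩).symm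

theorem Cross.node_touch {e f : X × Y} (h : S.Cross e f) {A : Set ℂ} (hA : IsPathConnected A)
    (ht : S.p e.1 ∈ A ∨ S.p f.1 ∈ A ∨ S.q e.2 ∈ A) : IsPathConnected (A ∪ S.node e f) := by
  have key : ∀ (z : ℂ) (g : X × Y), z ∈ A → IsPathConnected (insert z (S.arc g)) →
      S.arc g ⊆ S.node e f → IsPathConnected (A ∪ S.node e f) := by
    intro z g hz hg hsub
    obtain ⟨u, hu⟩ := (S.conn g).nonempty
    have h1 := hA.union hg ⟨z, hz, Or.inl rfl⟩
    have h2 := h1.union h.node_conn ⟨u, Or.inr (Or.inr hu), hsub hu⟩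
    convert h2 using 1
    ext v; simp only [mem_union, mem_insert_iff]
    constructor
    · tauto
    · rintro ((hv | rfl | hv) | hv)
      · exact Or.inl hv
      · exact Or.inl hz
      · exact Or.inr (hsub hv)
      · exact Or.inr hv
  rcases ht with ht | ht | ht
  · exact key _ e ht (S.conn_left e) subset_union_left
  · exact key _ f ht (S.conn_left f) subset_union_right
  · exact key _ e ht (S.conn_right e) subset_union_left

variable (S) in
/-- All edges at the row `w`, with their ends; in particular it contains every column. -/
def star (w : X) : Set ℂ := ⋃ y, S.edge (w, y)

theorem star_conn [Nonempty Y] (w : X) : IsPathConnected (S.star w) := by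
  refine ⟨S.p w, mem_iUnion.2 ⟨Classical.arbitrary Y, by simp [edge]⟩, fun {z} hz => ?_⟩
  obtain ⟨y, hy⟩ := mem_iUnion.1 hz
  exact ((S.edge_conn (w, y)).joinedIn _ (by simp [edge]) _ hy).mono (subset_iUnion (fun y => S.edge (w, y)) y)

theorem p_notMem_star {x w : X} (h : x ≠ w) : S.p x ∉ S.star w := by
  simp only [star, mem_iUnion, edge, mem_insert_iff, not_exists, not_or]
  exact fun y => ⟨S.p_inj.ne h, S.p_ne_q _ _, S.p_notMem _ _⟩

theorem Cross.disjoint_star {e f : X × Y} (h : S.Cross e f) {w : X} (he : e.1 ≠ w)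
    (hf : f.1 ≠ w) : Disjoint (S.star w) (S.node e f) := by
  simp only [star, disjoint_iUnion_left]
  intro y
  have h1 := h.disjoint_arc (g := (w, y)) (fun h => he (by rw [← h])) (fun h => hf (by rw [← h]))
  rw [disjoint_left] at h1 ⊢
  simp only [edge, mem_insert_iff]
  rintro z (rfl | rfl | hz) hz'
  · exact hz'.elim (S.p_notMem _ _) (S.p_notMem _ _)
  · exact hz'.elim (S.q_notMem _ _) (S.q_notMem _ _)
  · exact h1 hz hz'

/-- Three crossings cannot all connect a connected set `A`, reached by their first edges, to the row
`y`, if the star of a further row `w` is disjoint from `A`: the branch sets `A`, `{y}`, `star w` on one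
side and the three nodes on the other would form a `K_{3,3}` minor. -/
theorem no_theta [Nonempty Y] {y w : X} (hyw : y ≠ w) {A : Set ℂ} (hA : IsPathConnected A)
    (hyA : S.p y ∉ A) (hwA : Disjoint A (S.star w)) (e f : Fin 3 → X × Y)
    (hef : ∀ k, S.Cross (e k) (f k)) (he : ∀ k, S.p (e k).1 ∈ A) (hf : ∀ k, (f k).1 = y)
    (hew : ∀ k, (e k).1 ≠ w) (hAN : ∀ k, Disjoint A (S.node (e k) (f k)))
    (hinj : Function.Injective e) : False := by
  have hfe : ∀ k l, e k ≠ f l := fun k l h => hyA (by rw [← hf l, ← h]; exact he k)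
  have hyN : ∀ k, S.p y ∉ S.node (e k) (f k) := fun k h => h.elim (S.p_notMem _ _) (S.p_notMem _ _)
  refine k33_disjoint ![A, {S.p y}, S.star w] (fun k => S.node (e k) (f k)) ?_ ?_ ?_ ?_ ?_ ?_
  · have h1 : Disjoint A {S.p y} := disjoint_singleton_right.2 hyA
    have h2 : Disjoint {S.p y} (S.star w) := disjoint_singleton_left.2 (p_notMem_star hyw)
    intro i j hij
    fin_cases i <;> fin_cases j <;>
      first
        | exact (hij rfl).elim
        | exact h1
        | exact h1.symm
        | exact h2
        | exact h2.symm
        | exact hwA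
        | exact hwA.symm
  · intro k l hkl
    exact (hef k).disjoint_node (hef l) (hinj.ne hkl.symm) (hfe l k)
  · intro i k
    fin_cases i
    · exact hAN k
    · exact disjoint_singleton_left.2 (hyN k)
    · exact (hef k).disjoint_star (hew k) (by rw [hf]; exact hyw)
  · intro i
    fin_cases i
    · exact hA.nonempty
    · exact singleton_nonempty _
    · exact (star_conn w).nonempty
  · exact fun k => (hef k).node_conn.nonempty
  · intro i k
    fin_cases i
    · exact (hef k).node_touch hA (Or.inl (he k))
    · exact (hef k).node_touch (isPathConnected_singleton _) (Or.inr (Or.inl (by simp [hf])))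
    · exact (hef k).node_touch (star_conn w) (Or.inr (Or.inr (mem_iUnion.2 ⟨(e k).2, by
        simp [edge]⟩)))

/-- Two rows are joined by at most two crossings, given that there is a third row `w`. -/
theorem no_three {x y w : X} (hxy : x ≠ y) (hxw : x ≠ w) (hyw : y ≠ w) (a b : Fin 3 → Y)
    (ha : Function.Injective a) (h : ∀ k, S.Cross (x, a k) (y, b k)) : False := by
  have : Nonempty Y := ⟨a 0⟩
  refine no_theta (S := S) hyw (isPathConnected_singleton (S.p x)) (by simpa using S.p_inj.ne hxy.symm)
    (disjoint_singleton_left.2 (p_notMem_star hxw)) (fun k => (x, a k)) (fun k => (y, b k)) h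
    (by simp) (by simp) (fun _ => hxw) (fun k => disjoint_singleton_left.2 fun h =>
      h.elim (S.p_notMem _ _) (S.p_notMem _ _)) (fun k l hkl => ha (congrArg Prod.snd hkl))

/-- Given a fourth row `w`, if the rows `x`, `y`, `z` are pairwise joined by crossings, then `x` and
`y` are joined only once: contracting `x`, `z` and the crossing between them leaves three crossings
between the result and `y`. -/
theorem no_triangle {x y z w : X} (hxy : x ≠ y) (hxz : x ≠ z) (hyz : y ≠ z) (hxw : x ≠ w)
    (hyw : y ≠ w) (hzw : z ≠ w) {a b a' b' c d s t : Y} (h1 : S.Cross (x, a) (y, b))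
    (h2 : S.Cross (x, a') (y, b')) (haa : a ≠ a') (h3 : S.Cross (z, c) (y, d))
    (h4 : S.Cross (x, s) (z, t)) : False := by
  have : Nonempty Y := ⟨a⟩
  -- the branch set made of `x`, `z` and the crossing that joins them
  have hA := h4.node_touch (isPathConnected_singleton (S.p x)) (Or.inl rfl)
  have hA' := hA.union (S.conn_left (z, t)) (by
    obtain ⟨u, hu⟩ := (S.conn (z, t)).nonempty
    exact ⟨u, Or.inr (Or.inr hu), Or.inr hu⟩)
  have hmem : ∀ v, v ∈ ({S.p x} ∪ S.node (x, s) (z, t) ∪ insert (S.p (z, t).1) (S.arc (z, t))) ↔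
      v = S.p x ∨ v = S.p z ∨ v ∈ S.node (x, s) (z, t) := by
    intro v; simp [node]; tauto
  generalize ({S.p x} ∪ S.node (x, s) (z, t) ∪ insert (S.p (z, t).1) (S.arc (z, t))) = A
    at hA' hmem
  have hnode : ∀ v (e f : X × Y), S.p v ∉ S.node e f := fun v e f h =>
    h.elim (S.p_notMem _ _) (S.p_notMem _ _)
  refine no_theta (S := S) hyw (A := A) hA' ?_ ?_ ![(x, a), (x, a'), (z, c)] ![(y, b), (y, b'), (y, d)]
    ?_ ?_ ?_ ?_ ?_ ?_
  · rw [hmem]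
    simp [S.p_inj.eq_iff, hxy.symm, hyz, hnode]
  · rw [disjoint_left]
    intro v hv
    rcases (hmem v).1 hv with rfl | rfl | hv
    · exact p_notMem_star hxw
    · exact p_notMem_star hzw
    · exact disjoint_right.1 (h4.disjoint_star hxw hzw) hv
  · intro k; fin_cases k
    · exact h1
    · exact h2
    · exact h3
  · intro k; fin_cases k <;> simp [hmem]
  · intro k; fin_cases k <;> simp
  · intro k; fin_cases k <;> simp [hxw, hzw]
  · have key : ∀ e f : X × Y, S.Cross e f → f.1 = y → Disjoint A (S.node e f) := by
      intro e f hc hf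
      rw [disjoint_left]
      intro v hv
      rcases (hmem v).1 hv with rfl | rfl | hv
      · exact hnode _ _ _
      · exact hnode _ _ _
      · refine disjoint_left.1 (h4.disjoint_node hc.symm ?_ ?_ |>.mono_right ?_) hv
        · rintro rfl; exact hxy hf
        · rintro rfl; exact hyz hf.symm
        · simp [node, union_comm]
    intro k; fin_cases k
    · exact key _ _ h1 rfl
    · exact key _ _ h2 rfl
    · exact key _ _ h3 rfl
  · intro k l
    fin_cases k <;> fin_cases l <;> simp [haa, haa.symm, hxz, hxz.symm]

end Sketch

/-! ### Counting crossings -/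

/-- Each pair out of `5` (or `7`) columns lies in `3` (or `5`) triples. -/
theorem card_triples_through : (∀ a b : Fin 5, a ≠ b →
      (((Finset.univ : Finset (Fin 5)).powersetCard 3).filter
        (fun T => a ∈ T ∧ b ∈ T)).card ≤ 3) ∧
    (∀ a b : Fin 7, a ≠ b →
      (((Finset.univ : Finset (Fin 7)).powersetCard 3).filter
        (fun T => a ∈ T ∧ b ∈ T)).card ≤ 5) := by
  constructor <;> decide +kernel

/-- A set of pairs that hits all triples has at least `n.choose 3 / k` elements, if each pair lies
in at most `k` triples. -/
theorem card_triples_le {n k : ℕ} (hk : ∀ a b : Fin n, a ≠ b →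
      (((Finset.univ : Finset (Fin n)).powersetCard 3).filter
        (fun T => a ∈ T ∧ b ∈ T)).card ≤ k)
    (P : Finset (Fin n × Fin n)) (hP : ∀ e ∈ P, e.1 ≠ e.2)
    (hit : ∀ T : Finset (Fin n), T.card = 3 → ∃ e ∈ P, e.1 ∈ T ∧ e.2 ∈ T) :
    n.choose 3 ≤ P.card * k := by
  classical
  have hsub : (Finset.univ : Finset (Fin n)).powersetCard 3 ⊆ P.biUnion fun e =>
      ((Finset.univ : Finset (Fin n)).powersetCard 3).filter (fun T => e.1 ∈ T ∧ e.2 ∈ T) := by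
    intro T hT
    obtain ⟨e, he, h⟩ := hit T (Finset.mem_powersetCard.1 hT).2
    exact Finset.mem_biUnion.2 ⟨e, he, Finset.mem_filter.2 ⟨hT, h⟩⟩
  have h1 := Finset.card_le_card hsub
  rw [Finset.card_powersetCard, Finset.card_univ, Fintype.card_fin] at h1
  exact h1.trans (Finset.card_biUnion_le_card_mul _ _ _ fun e he => hk _ _ (hP e he))

/-- At most four pairs out of five columns that hit every triple contain a triangle (the minimal
configuration being a triangle and a disjoint edge). -/
theorem exists_triangle : ∀ E ∈ ((Finset.univ : Finset (Fin 5 × Fin 5)).filter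
      fun e => e.1 < e.2).powerset, E.card ≤ 4 →
    (∀ a b c, a < b → b < c → (a, b) ∈ E ∨ (b, c) ∈ E ∨ (a, c) ∈ E) →
    ∃ a b c, a < b ∧ b < c ∧ (a, b) ∈ E ∧ (b, c) ∈ E ∧ (a, c) ∈ E := by
  decide +kernel

namespace Sketch

open Classical in
/-- The pairs of distinct columns `(y, y')` such that the edges `(x, y)` and `(x', y')` cross. -/
noncomputable def crossings {X Y : Type*} [Fintype Y] (S : Sketch X Y) (x x' : X) :
    Finset (Y × Y) :=
  Finset.univ.filter fun e => e.1 ≠ e.2 ∧ S.Cross (x, e.1) (x', e.2)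

variable {X Y : Type*} [Fintype Y] {S : Sketch X Y}

theorem mem_crossings {x x' : X} {e : Y × Y} :
    e ∈ S.crossings x x' ↔ e.1 ≠ e.2 ∧ S.Cross (x, e.1) (x', e.2) := by
  simp [crossings]

theorem swap_mem_crossings {x x' : X} {e : Y × Y} (h : e ∈ S.crossings x x') :
    e.swap ∈ S.crossings x' x := by
  rw [mem_crossings] at h ⊢
  exact ⟨h.1.symm, h.2.symm⟩

theorem fst_injOn_crossings {x x' : X} {e f : Y × Y} (he : e ∈ S.crossings x x')
    (hf : f ∈ S.crossings x x') (h : e.1 = f.1) : e = f := by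
  rw [mem_crossings] at he hf
  have := he.2.unique (h ▸ hf.2)
  exact Prod.ext h (Prod.mk.inj this).2

theorem card_crossings_le_two {x y w : X} (hxy : x ≠ y) (hxw : x ≠ w) (hyw : y ≠ w) :
    (S.crossings x y).card ≤ 2 := by
  by_contra! h
  obtain ⟨e, he, f, hf, g, hg, hef, heg, hfg⟩ := Finset.two_lt_card.1 h
  have h1 : e.1 ≠ f.1 := fun h => hef (fst_injOn_crossings he hf h)
  have h2 : e.1 ≠ g.1 := fun h => heg (fst_injOn_crossings he hg h)
  have h3 : f.1 ≠ g.1 := fun h => hfg (fst_injOn_crossings hf hg h)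
  rw [mem_crossings] at he hf hg
  refine no_three (S := S) hxy hxw hyw ![e.1, f.1, g.1] ![e.2, f.2, g.2] ?_ ?_
  · intro k l
    fin_cases k <;> fin_cases l <;> simp [h1, h2, h3, h1.symm, h2.symm, h3.symm]
  · intro k
    fin_cases k
    · exact he.2
    · exact hf.2
    · exact hg.2

theorem card_crossings_le_one {x y z w : X} (hxy : x ≠ y) (hxz : x ≠ z) (hyz : y ≠ z)
    (hxw : x ≠ w) (hyw : y ≠ w) (hzw : z ≠ w) (h1 : (S.crossings x z).Nonempty)
    (h2 : (S.crossings z y).Nonempty) : (S.crossings x y).card ≤ 1 := by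
  rw [Finset.card_le_one]
  intro e he f hf
  by_contra hef
  have h3 := fun h => hef (fst_injOn_crossings he hf h)
  obtain ⟨g, hg⟩ := h1
  obtain ⟨k, hk⟩ := h2
  rw [mem_crossings] at he hf hg hk
  exact no_triangle hxy hxz hyz hxw hyw hzw he.2 hf.2 h3 hk.2 hg.2

theorem exists_mem_crossings {n : ℕ} {S : Sketch X (Fin n)} {x y z : X} (hxy : x ≠ y)
    (hxz : x ≠ z) (hyz : y ≠ z) {T : Finset (Fin n)} (hT : T.card = 3) :
    ∃ e ∈ S.crossings x y ∪ S.crossings y z ∪ S.crossings x z, e.1 ∈ T ∧ e.2 ∈ T := by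
  have hx : Function.Injective ![x, y, z] := by
    intro k l
    fin_cases k <;> fin_cases l <;> simp [hxy, hxz, hyz, hxy.symm, hxz.symm, hyz.symm]
  obtain ⟨i, i', j, j', hi, hj, h⟩ := S.exists_cross hx (T.orderEmbOfFin hT).injective
  have hj' := (T.orderEmbOfFin hT).injective.ne hj
  have m1 := T.orderEmbOfFin_mem hT j
  have m2 := T.orderEmbOfFin_mem hT j'
  generalize T.orderEmbOfFin hT j = a at *
  generalize T.orderEmbOfFin hT j' = b at *
  have key : ∀ u v, S.Cross (u, a) (v, b) → (a, b) ∈ S.crossings u v ∧ (b, a) ∈ S.crossings v u :=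
    fun u v h => ⟨mem_crossings.2 ⟨hj', h⟩, mem_crossings.2 ⟨hj'.symm, h.symm⟩⟩
  have h' := key _ _ h
  fin_cases i <;> fin_cases i' <;> simp at h' hi
  all_goals first
    | (refine ⟨(a, b), ?_, m1, m2⟩; simp [h']; done)
    | (refine ⟨(b, a), ?_, m2, m1⟩; simp [h'])

theorem ne_of_mem {x y z : X} [DecidableEq Y] {e : Y × Y}
    (h : e ∈ S.crossings x y ∪ S.crossings y z ∪ S.crossings x z) : e.1 ≠ e.2 := by
  simp only [Finset.mem_union, mem_crossings] at h
  tauto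

/-- Each pair of rows has at most two crossings, so at most six pairs of columns would have to hit
all 35 triples of columns; but each hits only five. -/
theorem not_three_seven (S : Sketch (Fin 3) (Fin 7)) : False := by
  have h := card_triples_le card_triples_through.2
    (S.crossings 0 1 ∪ S.crossings 1 2 ∪ S.crossings 0 2) (fun e he => ne_of_mem he)
    (fun T hT => exists_mem_crossings (by decide) (by decide) (by decide) hT)
  have h1 : (S.crossings 0 1).card ≤ 2 :=
    card_crossings_le_two (w := 2) (by decide) (by decide) (by decide)
  have h2 : (S.crossings 1 2).card ≤ 2 :=
    card_crossings_le_two (w := 0) (by decide) (by decide) (by decide)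
  have h3 : (S.crossings 0 2).card ≤ 2 :=
    card_crossings_le_two (w := 1) (by decide) (by decide) (by decide)
  have h4 := Finset.card_union_le (S.crossings 0 1 ∪ S.crossings 1 2) (S.crossings 0 2)
  have h5 := Finset.card_union_le (S.crossings 0 1) (S.crossings 1 2)
  have : Nat.choose 7 3 = 35 := by decide
  omega

/-- The case where two rows `x`, `z` are joined by no crossing. The crossings among the rows `x`,
`y`, `z` then join some three columns pairwise. The rows `x`, `z`, `w` provide one more crossing within
these columns, contradicting `no_triangle` for the transposed picture. -/
theorem four_five_aux {S : Sketch X (Fin 5)} {x y z w : X} (hxy : x ≠ y) (hxz : x ≠ z)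
    (hyz : y ≠ z) (hxw : x ≠ w) (hyw : y ≠ w) (hzw : z ≠ w) (h0 : S.crossings x z = ∅) :
    False := by
  classical
  -- columns `u`, `v` are joined by a crossing avoiding the row `w`
  let J : Fin 5 → Fin 5 → Prop := fun u v => ∃ r s, r ≠ w ∧ s ≠ w ∧ S.Cross (r, u) (s, v)
  have hJsymm : ∀ u v, J u v → J v u := fun u v ⟨r, s, hr, hs, h⟩ => ⟨s, r, hs, hr, h.symm⟩
  obtain ⟨a, b, c, hab, hbc, j1, j2, j3⟩ :
      ∃ a b c : Fin 5, a < b ∧ b < c ∧ J a b ∧ J b c ∧ J a c := by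
    let P := S.crossings x y ∪ S.crossings y z
    let E := P.image fun e => (min e.1 e.2, max e.1 e.2)
    have hP : ∀ e ∈ P, e.1 ≠ e.2 ∧ J e.1 e.2 := by
      intro e he
      rcases Finset.mem_union.1 he with he | he <;> rw [mem_crossings] at he
      · exact ⟨he.1, x, y, hxw, hyw, he.2⟩
      · exact ⟨he.1, y, z, hyw, hzw, he.2⟩
    have hJ : ∀ u v, (u, v) ∈ E → J u v := by
      intro u v h
      obtain ⟨e, he, hh⟩ := Finset.mem_image.1 h
      simp only [Prod.mk.injEq] at hh
      rcases le_total e.1 e.2 with h | h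
      · rw [min_eq_left h, max_eq_right h] at hh
        exact hh.1 ▸ hh.2 ▸ (hP e he).2
      · rw [min_eq_right h, max_eq_left h] at hh
        exact hh.1 ▸ hh.2 ▸ hJsymm _ _ (hP e he).2
    have hcard : E.card ≤ 4 := by
      have h1 : (S.crossings x y).card ≤ 2 := card_crossings_le_two hxy hxw hyw
      have h2 : (S.crossings y z).card ≤ 2 := card_crossings_le_two hyz hyw hzw
      have h3 : P.card ≤ _ := Finset.card_union_le _ _
      have h4 : E.card ≤ P.card := Finset.card_image_le
      omega
    obtain ⟨a, b, c, hab, hbc, h1, h2, h3⟩ := exists_triangle E (by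
      rw [Finset.mem_powerset]
      intro e he
      obtain ⟨f, hf, rfl⟩ := Finset.mem_image.1 he
      simpa [eq_comm] using (hP f hf).1) hcard (by
      intro a b c hab hbc
      obtain ⟨e, he, h1, h2⟩ := exists_mem_crossings (S := S) hxy hxz hyz (T := {a, b, c})
        (Finset.card_eq_three.2 ⟨a, b, c, hab.ne, (hab.trans hbc).ne, hbc.ne, rfl⟩)
      rw [h0, Finset.union_empty] at he
      have he' : (min e.1 e.2, max e.1 e.2) ∈ E := Finset.mem_image_of_mem _ he
      have hne := (hP e he).1
      have hac := hab.trans hbc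
      obtain ⟨u, v⟩ := e
      simp only [Finset.mem_insert, Finset.mem_singleton] at h1 h2 he' hne
      rcases h1 with rfl | rfl | rfl <;> rcases h2 with rfl | rfl | rfl <;>
        simp_all [le_of_lt])
    exact ⟨a, b, c, hab, hbc, hJ _ _ h1, hJ _ _ h2, hJ _ _ h3⟩
  have hac := hab.trans hbc
  have hfin : ∀ a b c : Fin 5, ∃ d, a ≠ d ∧ b ≠ d ∧ c ≠ d := by decide
  -- a fourth crossing among the three columns, involving the row `w`
  have step : ∀ u v t r, u ≠ v → u ≠ t → v ≠ t → J u v → J u t → J v t →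
      S.Cross (r, u) (w, v) → False := by
    rintro u v t r huv hut hvt ⟨r₁, s₁, hr₁, hs₁, c₁⟩ ⟨r₂, s₂, -, -, c₂⟩ ⟨r₃, s₃, -, -, c₃⟩ h
    obtain ⟨d, hud, hvd, htd⟩ := hfin u v t
    refine no_triangle (S := S.transpose) huv hut hvt hud hvd htd (S.transpose_cross h)
      (S.transpose_cross c₁) ?_ (S.transpose_cross c₃.symm) (S.transpose_cross c₂)
    rintro rfl
    exact hs₁ (congrArg Prod.fst (h.unique c₁)).symm
  obtain ⟨e, he, h1, h2⟩ := exists_mem_crossings (S := S) hxz hxw hzw (T := {a, b, c})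
    (Finset.card_eq_three.2 ⟨a, b, c, hab.ne, hac.ne, hbc.ne, rfl⟩)
  rw [h0, Finset.empty_union, Finset.mem_union, mem_crossings, mem_crossings] at he
  obtain ⟨r, hr⟩ : ∃ r, S.Cross (r, e.1) (w, e.2) := he.elim (fun h => ⟨_, h.2⟩) (fun h => ⟨_, h.2⟩)
  have hne : e.1 ≠ e.2 := he.elim (fun h => h.1) (fun h => h.1)
  obtain ⟨u, v⟩ := e
  have k1 := hJsymm _ _ j1
  have k2 := hJsymm _ _ j2
  have k3 := hJsymm _ _ j3
  simp only [Finset.mem_insert, Finset.mem_singleton] at h1 h2 hne hr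
  rcases h1 with rfl | rfl | rfl <;> rcases h2 with rfl | rfl | rfl
  · exact hne rfl
  · exact step _ _ _ r hab.ne hac.ne hbc.ne j1 j3 j2 hr
  · exact step _ _ _ r hac.ne hab.ne hbc.ne' j3 j1 k2 hr
  · exact step _ _ _ r hab.ne' hbc.ne hac.ne k1 j2 j3 hr
  · exact hne rfl
  · exact step _ _ _ r hbc.ne hab.ne' hac.ne' j2 k1 k3 hr
  · exact step _ _ _ r hac.ne' hbc.ne' hab.ne k3 k2 j1 hr
  · exact step _ _ _ r hbc.ne' hac.ne' hab.ne' k2 k3 k1 hr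
  · exact hne rfl

/-- If the rows `0`, `1`, `2` are pairwise joined by crossings, there is only one for each pair, and
three pairs of columns hit at most nine of the ten triples. -/
theorem not_four_five (S : Sketch (Fin 4) (Fin 5)) : False := by
  rcases (S.crossings 0 1).eq_empty_or_nonempty with h01 | h01
  · exact four_five_aux (y := 2) (w := 3) (by decide) (by decide) (by decide) (by decide)
      (by decide) (by decide) h01
  rcases (S.crossings 1 2).eq_empty_or_nonempty with h12 | h12
  · exact four_five_aux (y := 0) (w := 3) (by decide) (by decide) (by decide) (by decide)
      (by decide) (by decide) h12
  rcases (S.crossings 0 2).eq_empty_or_nonempty with h02 | h02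
  · exact four_five_aux (y := 1) (w := 3) (by decide) (by decide) (by decide) (by decide)
      (by decide) (by decide) h02
  have hs : ∀ {u v}, (S.crossings u v).Nonempty → (S.crossings v u).Nonempty :=
    fun ⟨e, he⟩ => ⟨_, swap_mem_crossings he⟩
  have h := card_triples_le card_triples_through.1
    (S.crossings 0 1 ∪ S.crossings 1 2 ∪ S.crossings 0 2) (fun e he => ne_of_mem he)
    (fun T hT => exists_mem_crossings (by decide) (by decide) (by decide) hT)
  have h1 : (S.crossings 0 1).card ≤ 1 := card_crossings_le_one (z := 2) (w := 3) (by decide)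
    (by decide) (by decide) (by decide) (by decide) (by decide) h02 (hs h12)
  have h2 : (S.crossings 1 2).card ≤ 1 := card_crossings_le_one (z := 0) (w := 3) (by decide)
    (by decide) (by decide) (by decide) (by decide) (by decide) (hs h01) h02
  have h3 : (S.crossings 0 2).card ≤ 1 := card_crossings_le_one (z := 1) (w := 3) (by decide)
    (by decide) (by decide) (by decide) (by decide) (by decide) h01 h12
  have h4 := Finset.card_union_le (S.crossings 0 1 ∪ S.crossings 1 2) (S.crossings 0 2)
  have h5 := Finset.card_union_le (S.crossings 0 1) (S.crossings 1 2)
  have : Nat.choose 5 3 = 10 := by decide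
  omega

end Sketch

/-! ### From drawings to sketches -/

namespace Drawing

variable {m n : ℕ}

/-- The edge of `K_{m,n}` between row `e.1` and column `e.2`. -/
def bipEdge (e : Fin m × Fin n) : (completeBipartiteGraph (Fin m) (Fin n)).edgeSet :=
  ⟨s(Sum.inl e.1, Sum.inr e.2), by simp⟩

theorem bipEdge_injective : Function.Injective (bipEdge (m := m) (n := n)) := by
  rintro ⟨i, a⟩ ⟨j, b⟩ h
  simpa [bipEdge] using h

theorem bipEdge_surjective : Function.Surjective (bipEdge (m := m) (n := n)) := by
  rintro ⟨e, he⟩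
  induction e using Sym2.ind with
  | _ u v =>
    rcases u with i | a <;> rcases v with j | b <;> simp at he
    · exact ⟨(i, b), rfl⟩
    · exact ⟨(j, a), Subtype.ext Sym2.eq_swap⟩

variable (D : Drawing (completeBipartiteGraph (Fin m) (Fin n)))

/-- The identification of `ℝ × ℝ` with `ℂ`. -/
noncomputable def toC : (ℝ × ℝ) ≃L[ℝ] ℂ := Complex.equivRealProdCLM.symm

/-- The interior of the curve of an edge, as a subset of `ℂ`. -/
def openArc (e : Fin m × Fin n) : Set ℂ := toC '' (D.curve (bipEdge e) '' Ioo 0 1)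

theorem image_conn (e : Fin m × Fin n) {s : Set ℝ} (hs : Convex ℝ s) (hne : s.Nonempty)
    (hsub : s ⊆ Icc 0 1) : IsPathConnected (toC '' (D.curve (bipEdge e) '' s)) :=
  ((hs.isPathConnected hne).image' ((D.curve_cont _).mono hsub)).image toC.continuous

theorem end_conn (e : Fin m × Fin n) (v : Fin m ⊕ Fin n)
    (hv : v ∈ (bipEdge e : Sym2 (Fin m ⊕ Fin n))) :
    IsPathConnected (insert (toC (D.pos v)) (D.openArc e)) := by
  obtain ⟨a, b, hab, h0, h1⟩ := D.curve_ends (bipEdge e)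
  rw [hab, Sym2.mem_iff] at hv
  rcases hv with rfl | rfl
  · rw [openArc, ← h0, ← image_insert_eq, ← image_insert_eq, Ioo_insert_left zero_lt_one]
    exact D.image_conn e (convex_Ico _ _) (by simp) Ico_subset_Icc_self
  · rw [openArc, ← h1, ← image_insert_eq, ← image_insert_eq, Ioo_insert_right zero_lt_one]
    exact D.image_conn e (convex_Ioc _ _) (by simp) Ioc_subset_Icc_self

theorem notMem_openArc (v : Fin m ⊕ Fin n) (e : Fin m × Fin n) :
    toC (D.pos v) ∉ D.openArc e := by
  rintro ⟨_, ⟨t, ht, rfl⟩, h⟩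
  exact D.interior_no_vertex _ t ht v (toC.injective h)

theorem crosses_of_openArc {e f : Fin m × Fin n} (hef : e ≠ f)
    (h : (D.openArc e ∩ D.openArc f).Nonempty) : D.Crosses (bipEdge e) (bipEdge f) := by
  obtain ⟨_, ⟨p, hp, rfl⟩, ⟨p', hp', h⟩⟩ := h
  obtain rfl := toC.injective h
  exact ⟨bipEdge_injective.ne hef, p', hp, hp'⟩

/-- The sketch underlying a 1-planar drawing. -/
noncomputable def toSketch (hD : D.IsAlmostPlanar) : Sketch (Fin m) (Fin n) where
  p i := toC (D.pos (Sum.inl i))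
  q a := toC (D.pos (Sum.inr a))
  arc := D.openArc
  p_inj i j h := Sum.inl_injective (D.pos_inj (toC.injective h))
  q_inj i j h := Sum.inr_injective (D.pos_inj (toC.injective h))
  p_ne_q i a h := Sum.inl_ne_inr (D.pos_inj (toC.injective h))
  p_notMem i e := D.notMem_openArc _ e
  q_notMem i e := D.notMem_openArc _ e
  conn e := D.image_conn e (convex_Ioo _ _) (by simp) Ioo_subset_Icc_self
  conn_left e := D.end_conn e _ (by simp [bipEdge])
  conn_right e := D.end_conn e _ (by simp [bipEdge])
  one_cross _ _ _ hf hg h h' := bipEdge_injective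
    (hD _ _ _ (D.crosses_of_openArc hf h) (D.crosses_of_openArc hg h'))

theorem bounds (hD : D.IsAlmostPlanar) (hmn : m ≤ n) :
    m ≤ 2 ∨ (m = 3 ∧ n ≤ 6) ∨ (m = 4 ∧ n = 4) := by
  by_contra! h
  obtain ⟨h2, h3, h4⟩ := h
  by_cases hm : m = 3
  · exact ((D.toSketch hD).comap (Fin.castLEEmb (n := 3) (by omega))
      (Fin.castLEEmb (n := 7) (by have := h3 hm; omega))).not_three_seven
  · exact ((D.toSketch hD).comap (Fin.castLEEmb (n := 4) (by omega))
      (Fin.castLEEmb (n := 5) (by by_contra; exact h4 (by omega) (by omega)))).not_four_five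

end Drawing

/-! ### Straight-line drawings -/

/-- Twice the signed area of the triangle `p q r`; it vanishes iff the points are collinear. -/
def orient {R : Type*} [CommRing R] (p q r : R × R) : R :=
  (q.1 - p.1) * (r.2 - p.2) - (q.2 - p.2) * (r.1 - p.1)

/-- The positions `P` of the rows and `Q` of the columns define a 1-planar straight-line drawing: no
vertex lies on the line through an edge it does not belong to, and each segment crosses at most one
other, where crossing means that each segment has its ends strictly on both sides of the other. -/
structure StraightLine {X Y : Type*} (P : X → ℤ × ℤ) (Q : Y → ℤ × ℤ) : Prop where
  left_inj : Function.Injective P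
  right_inj : Function.Injective Q
  ne : ∀ x y, P x ≠ Q y
  left_off : ∀ x y x₁, x₁ ≠ x → orient (P x) (Q y) (P x₁) ≠ 0
  right_off : ∀ x y y₁, y₁ ≠ y → orient (P x) (Q y) (Q y₁) ≠ 0
  one_cross : ∀ x y x₁ y₁, x ≠ x₁ → y ≠ y₁ →
    orient (P x) (Q y) (P x₁) * orient (P x) (Q y) (Q y₁) < 0 →
    orient (P x₁) (Q y₁) (P x) * orient (P x₁) (Q y₁) (Q y) < 0 →
    ∀ x₂ y₂, x ≠ x₂ → y ≠ y₂ →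
    orient (P x) (Q y) (P x₂) * orient (P x) (Q y) (Q y₂) < 0 →
    orient (P x₂) (Q y₂) (P x) * orient (P x₂) (Q y₂) (Q y) < 0 →
    x₁ = x₂ ∧ y₁ = y₂

/-- An integer point as a point of the real plane. -/
def realPt (p : ℤ × ℤ) : ℝ × ℝ := (p.1, p.2)

theorem realPt_injective : Function.Injective realPt := by
  rintro ⟨a, b⟩ ⟨c, d⟩ h
  simpa [realPt] using h

theorem orient_realPt (p q r : ℤ × ℤ) :
    orient (realPt p) (realPt q) (realPt r) = (orient p q r : ℤ) := by
  simp [orient, realPt]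

/-- The linear parametrization of the segment from `p` to `q`. -/
def seg (p q : ℝ × ℝ) (t : ℝ) : ℝ × ℝ :=
  ((1 - t) * p.1 + t * q.1, (1 - t) * p.2 + t * q.2)

theorem orient_seg (p q r s : ℝ × ℝ) (t : ℝ) :
    orient p q (seg r s t) = (1 - t) * orient p q r + t * orient p q s := by
  simp only [orient, seg]; ring

theorem orient_self_seg (p q : ℝ × ℝ) (t : ℝ) : orient p q (seg p q t) = 0 := by
  simp only [orient, seg]; ring

theorem seg_injective {p q : ℝ × ℝ} (h : p ≠ q) : Function.Injective (seg p q) := by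
  intro t u htu
  by_contra hne
  simp only [seg, Prod.mk.injEq] at htu
  refine h (Prod.ext ?_ ?_)
  · exact mul_left_cancel₀ (sub_ne_zero.2 hne) (by linarith [htu.1])
  · exact mul_left_cancel₀ (sub_ne_zero.2 hne) (by linarith [htu.2])

namespace StraightLine

variable {X Y : Type*} {P : X → ℤ × ℤ} {Q : Y → ℤ × ℤ}

theorem comp (h : StraightLine P Q) {X' Y' : Type*} {φ : X' → X} {ψ : Y' → Y}
    (hφ : Function.Injective φ) (hψ : Function.Injective ψ) :
    StraightLine (P ∘ φ) (Q ∘ ψ) where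
  left_inj := h.left_inj.comp hφ
  right_inj := h.right_inj.comp hψ
  ne _ _ := h.ne _ _
  left_off _ _ _ hx := h.left_off _ _ _ (hφ.ne hx)
  right_off _ _ _ hy := h.right_off _ _ _ (hψ.ne hy)
  one_cross _ _ _ _ hx hy h1 h2 _ _ hx' hy' h3 h4 :=
    (h.one_cross _ _ _ _ (hφ.ne hx) (hψ.ne hy) h1 h2 _ _ (hφ.ne hx') (hψ.ne hy') h3 h4).imp
      (fun h => hφ h) (fun h => hψ h)

variable (P Q) in
/-- The side of the line through the edge `e` on which `p` lies, as a signed area. -/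
def side (e : X × Y) (p : ℝ × ℝ) : ℝ := orient (realPt (P e.1)) (realPt (Q e.2)) p

variable (P Q) in
/-- The parametrized segment of the edge `e`. -/
def line (e : X × Y) (t : ℝ) : ℝ × ℝ := seg (realPt (P e.1)) (realPt (Q e.2)) t

theorem side_left (h : StraightLine P Q) {e : X × Y} {x : X} :
    side P Q e (realPt (P x)) = 0 ↔ x = e.1 := by
  refine ⟨fun h0 => ?_, fun h0 => by subst h0; simp [side, orient]⟩
  by_contra hx
  rw [side, orient_realPt, Int.cast_eq_zero] at h0
  exact h.left_off _ _ _ hx h0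

theorem side_right (h : StraightLine P Q) {e : X × Y} {y : Y} :
    side P Q e (realPt (Q y)) = 0 ↔ y = e.2 := by
  refine ⟨fun h0 => ?_, fun h0 => by subst h0; simp [side, orient, mul_comm]⟩
  by_contra hx
  rw [side, orient_realPt, Int.cast_eq_zero] at h0
  exact h.right_off _ _ _ hx h0

theorem line_inj (h : StraightLine P Q) (e : X × Y) : Function.Injective (line P Q e) :=
  seg_injective fun h' => h.ne _ _ (realPt_injective h')

theorem line_ne (h : StraightLine P Q) (e : X × Y) {t : ℝ} (ht : t ∈ Ioo (0 : ℝ) 1)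
    (v : X ⊕ Y) : line P Q e t ≠ realPt (Sum.elim P Q v) := by
  intro h0
  have h1 : side P Q e (realPt (Sum.elim P Q v)) = 0 := h0 ▸ orient_self_seg _ _ _
  rcases v with x | y
  · obtain rfl := h.side_left.1 h1
    exact ht.1.ne' (h.line_inj e (h0.trans (by simp [line, seg])))
  · obtain rfl := h.side_right.1 h1
    exact ht.2.ne (h.line_inj e (h0.trans (by simp [line, seg])))

theorem side_line_eq {e f : X × Y} {t u : ℝ} (h : line P Q e t = line P Q f u) :
    (1 - u) * side P Q e (realPt (P f.1)) + u * side P Q e (realPt (Q f.2)) = 0 := by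
  rw [side, side, ← orient_seg]
  exact (congrArg _ h.symm).trans (orient_self_seg _ _ _)

theorem finite_meet (h : StraightLine P Q) {e f : X × Y} (hef : e ≠ f) (s : Set ℝ) :
    (line P Q e '' s ∩ line P Q f '' s).Finite := by
  refine Set.Subsingleton.finite ?_
  rintro _ ⟨⟨t, -, rfl⟩, ⟨u, -, hu⟩⟩ _ ⟨⟨t', -, rfl⟩, ⟨u', -, hu'⟩⟩
  rw [← hu, ← hu']
  have e1 := side_line_eq hu.symm
  have e2 := side_line_eq hu'.symm
  by_contra hne
  have huu : u - u' ≠ 0 := sub_ne_zero.2 fun h => hne (h ▸ rfl)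
  have e3 : side P Q e (realPt (P f.1)) = side P Q e (realPt (Q f.2)) :=
    mul_left_cancel₀ huu (by linarith)
  have e4 : side P Q e (realPt (P f.1)) = 0 := by rw [← e3] at e1; linarith
  exact hef (Prod.ext (h.side_left.1 e4).symm (h.side_right.1 (e3 ▸ e4)).symm)

/-- If the relative interior of `f` meets the line through `e`, the ends of `f` are on different
sides of that line. -/
theorem sep (h : StraightLine P Q) {e f : X × Y} (hef : e ≠ f) {t u : ℝ}
    (hu : u ∈ Ioo (0 : ℝ) 1) (htu : line P Q e t = line P Q f u) :
    e.1 ≠ f.1 ∧ e.2 ≠ f.2 ∧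
      orient (P e.1) (Q e.2) (P f.1) * orient (P e.1) (Q e.2) (Q f.2) < 0 := by
  have e1 := side_line_eq htu
  have hu0 := hu.1
  have hu1 : 0 < 1 - u := sub_pos.2 hu.2
  have h1 : e.1 ≠ f.1 := by
    intro h1
    rw [h.side_left.2 h1.symm, mul_zero, zero_add] at e1
    exact hef (Prod.ext h1 (h.side_right.1 ((mul_eq_zero.1 e1).resolve_left hu0.ne')).symm)
  have h2 : side P Q e (realPt (P f.1)) ≠ 0 := fun h2 => h1 (h.side_left.1 h2).symm
  have h3 : e.2 ≠ f.2 := by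
    intro h3
    rw [h.side_right.2 h3.symm, mul_zero, add_zero] at e1
    exact h2 ((mul_eq_zero.1 e1).resolve_left hu1.ne')
  refine ⟨h1, h3, ?_⟩
  have h4 : side P Q e (realPt (P f.1)) * side P Q e (realPt (Q f.2)) < 0 := by
    generalize side P Q e (realPt (P f.1)) = a at *
    generalize side P Q e (realPt (Q f.2)) = b at *
    have : u * (a * b) = -((1 - u) * a ^ 2) := by linear_combination a * e1
    have h5 : 0 < (1 - u) * a ^ 2 := by positivity
    by_contra! h6
    have := mul_nonneg hu0.le h6
    linarith
  rw [side, side, orient_realPt, orient_realPt] at h4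
  exact_mod_cast h4

theorem meet_unique (h : StraightLine P Q) {e f g : X × Y} (hef : e ≠ f) (heg : e ≠ g)
    (h1 : (line P Q e '' Ioo 0 1 ∩ line P Q f '' Ioo 0 1).Nonempty)
    (h2 : (line P Q e '' Ioo 0 1 ∩ line P Q g '' Ioo 0 1).Nonempty) : f = g := by
  obtain ⟨_, ⟨t, ht, rfl⟩, ⟨u, hu, h1⟩⟩ := h1
  obtain ⟨_, ⟨t', ht', rfl⟩, ⟨u', hu', h2⟩⟩ := h2
  obtain ⟨a1, a2, a3⟩ := h.sep hef hu h1.symm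
  obtain ⟨-, -, a4⟩ := h.sep hef.symm ht h1
  obtain ⟨b1, b2, b3⟩ := h.sep heg hu' h2.symm
  obtain ⟨-, -, b4⟩ := h.sep heg.symm ht' h2
  obtain ⟨c1, c2⟩ := h.one_cross _ _ _ _ a1 a2 a3 a4 _ _ b1 b2 b3 b4
  exact Prod.ext c1 c2

theorem almostPlanar {m n : ℕ} {P : Fin m → ℤ × ℤ} {Q : Fin n → ℤ × ℤ}
    (h : StraightLine P Q) : (completeBipartiteGraph (Fin m) (Fin n)).AlmostPlanar := by
  obtain ⟨c, hc⟩ := Drawing.bipEdge_surjective (m := m) (n := n).hasRightInverse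
  have hcinj : Function.Injective c := hc.injective
  let D : Drawing (completeBipartiteGraph (Fin m) (Fin n)) :=
    { pos := fun v => realPt (Sum.elim P Q v)
      pos_inj := realPt_injective.comp (h.left_inj.sumElim h.right_inj h.ne)
      curve := fun e => line P Q (c e)
      curve_cont := fun e => by unfold line seg; fun_prop
      curve_inj := fun e => (h.line_inj _).injOn
      curve_ends := fun e => ⟨Sum.inl (c e).1, Sum.inr (c e).2, by
        conv_lhs => rw [← hc e]
        rfl, by simp [line, seg], by simp [line, seg]⟩
      interior_no_vertex := fun e t ht v => h.line_ne _ ht v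
      finite_meet := fun e f hef => h.finite_meet (hcinj.ne hef) _
      no_triple_point := fun p e f g hef heg hfg he hf hg => hfg (hcinj
        (h.meet_unique (hcinj.ne hef) (hcinj.ne heg) ⟨p, he, hf⟩ ⟨p, he, hg⟩)) }
  exact ⟨D, fun e f g ⟨hf, p, hp⟩ ⟨hg, p', hp'⟩ =>
    hcinj (h.meet_unique (hcinj.ne hf) (hcinj.ne hg) ⟨p, hp⟩ ⟨p', hp'⟩)⟩

theorem four_four : StraightLine (![(0, 11), (11, 6), (7, 3), (10, 5)] : Fin 4 → ℤ × ℤ)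
    (![(8, 0), (4, 8), (8, 1), (7, 7)] : Fin 4 → ℤ × ℤ) := by
  constructor <;> decide +kernel

theorem three_six : StraightLine (![(1, 2), (8, 3), (5, 7)] : Fin 3 → ℤ × ℤ)
    (![(11, 2), (0, 1), (5, 5), (7, 11), (6, 4), (4, 4)] : Fin 6 → ℤ × ℤ) := by
  constructor <;> decide +kernel

theorem two_any (n : ℕ) : StraightLine (![(0, 1), (0, -1)] : Fin 2 → ℤ × ℤ)
    (fun k : Fin n => ((k : ℤ) + 1, 0)) where
  left_inj := by decide
  right_inj k l h := by
    simp only [Prod.mk.injEq, and_true] at h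
    ext; omega
  ne x y := by fin_cases x <;> simp
  left_off x y x' h := by
    fin_cases x <;> fin_cases x' <;> simp [orient] at h ⊢ <;> omega
  right_off x y y' h := by
    have : (y : ℕ) ≠ y' := fun h' => h (Fin.ext h'.symm)
    fin_cases x <;> simp [orient] <;> omega
  one_cross x y x' y' hx hy h1 h2 := by
    exfalso
    fin_cases x <;> fin_cases x' <;> simp [orient] at hx h1 h2
    all_goals
      rcases le_total ((y : ℤ)) (y' : ℤ) with h | h
      · first | nlinarith | omega
      · first | nlinarith | omega

end StraightLine

/-- For `1 ≤ m ≤ n`, the complete bipartite graph `K_{m,n}` is almost planar iff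
`m ≤ 2`, or `m = 3` and `n ≤ 6`, or `m = 4` and `n = 4`. -/
theorem completeBipartite_almostPlanar_iff (m n : ℕ) (hm : 1 ≤ m) (hmn : m ≤ n) :
    (completeBipartiteGraph (Fin m) (Fin n)).AlmostPlanar ↔
      m ≤ 2 ∨ (m = 3 ∧ n ≤ 6) ∨ (m = 4 ∧ n = 4) := by
  refine ⟨fun ⟨D, hD⟩ => D.bounds hD hmn, ?_⟩
  rintro (h | ⟨rfl, h⟩ | ⟨rfl, rfl⟩)
  · exact ((StraightLine.two_any n).comp (Fin.castLE_injective h)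
      Function.injective_id).almostPlanar
  · exact (StraightLine.three_six.comp Function.injective_id
      (Fin.castLE_injective h)).almostPlanar
  · exact StraightLine.four_four.almostPlanar
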